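/- For every real ε > 0 there exists k₀ = k₀(ε) such that for every integer k ≥ k₀, every real r with 0 < r ≤ 2^(k-1)·ln 2 − (ln 2)/2 − 1/2 − ε, and every α ∈ (0.9, 1], one has g_r(α) < g_r(1/2). -/

import Mathlib

/-- The correlation function for NAE `k`-SAT:
`f_N(α) = 1 - 2^(2-k) + 2^(1-k) (α^k + (1-α)^k)`. -/
noncomputable def fN (k : ℕ) (α : ℝ) : ℝ :=
  1 - (2 : ℝ) ^ ((2 : ℤ) - k) + (2 : ℝ) ^ ((1 : ℤ) - k) * (α ^ k + (1 - α) ^ k)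

/-- `g_r(α) = f_N(α)^r / (α^α (1-α)^(1-α))`, with the `0^0 = 1` convention of
`Real.rpow` at the endpoints. -/
noncomputable def gr (k : ℕ) (r : ℝ) (α : ℝ) : ℝ :=
  fN k α ^ r / (α ^ α * (1 - α) ^ (1 - α))

lemma core_bound (k : ℕ) (hk : 4 ≤ k) (m η δ : ℝ) (hη : 0 < η)
    (hm : 0.6 ≤ m) (hm2 : m ≤ Real.log 2) (hmk : (Real.log 2 - m) * k ≤ η)
    (hlog : 1 + Real.log (2 / η) + 2 * Real.log k ≤ 0.15 * k)
    (hδ0 : 0 ≤ δ) (hδ : δ < 0.1) :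
    δ * (1 - Real.log δ) - m * (1 - ((1 - δ) ^ k + δ ^ k))
      ≤ (1 / 2 : ℝ) ^ k * Real.exp (2 * η) := by
  have hkR : (4 : ℝ) ≤ k := by exact_mod_cast hk
  have hl2 := Real.log_two_lt_d9
  have hl2' := Real.log_two_gt_d9
  have hApos : 0 < (1 / 2 : ℝ) ^ k * Real.exp (2 * η) := by positivity
  have hk0 : k ≠ 0 := by omega
  rcases hδ0.eq_or_lt with h0 | hpos
  · subst h0
    simp [hk0]
    positivity
  have hdk2 : δ ^ k ≤ δ ^ 2 := pow_le_pow_of_le_one hδ0 (by linarith) (by omega)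
  have hexp : (1 - δ) ^ k ≤ Real.exp (-(k * δ)) := by
    have h1 : 1 - δ ≤ Real.exp (-δ) := Real.one_sub_le_exp_neg δ
    calc (1 - δ) ^ k ≤ (Real.exp (-δ)) ^ k := pow_le_pow_left₀ (by linarith) h1 k
      _ = Real.exp (-(k * δ)) := by rw [← Real.exp_nat_mul]; ring_nf
  rcases le_or_gt 1 (k * δ) with hbig | hsmall
  · have h1 : (1 - δ) ^ k ≤ 0.37 := by
      refine hexp.trans ?_
      have : Real.exp (-(k * δ)) ≤ Real.exp (-1) := Real.exp_le_exp.mpr (by linarith)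
      have := Real.exp_neg_one_lt_d9
      linarith
    have h2 : δ ^ k ≤ 0.0001 := by
      calc δ ^ k ≤ δ ^ 4 := pow_le_pow_of_le_one hδ0 (by linarith) hk
        _ ≤ 0.1 ^ 4 := pow_le_pow_left₀ hδ0 hδ.le 4
        _ = 0.0001 := by norm_num
    have h3 : δ * (1 - Real.log δ) ≤ 3 * δ * Real.log 2 + 1 / 8 := by
      have h := Real.log_le_sub_one_of_pos (x := 1 / (8 * δ)) (by positivity)
      have e : Real.log (1 / (8 * δ)) = -(3 * Real.log 2) - Real.log δ := by
        rw [one_div, Real.log_inv, Real.log_mul (by norm_num) hpos.ne',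
          show (8 : ℝ) = 2 ^ 3 by norm_num, Real.log_pow]
        push_cast; ring
      rw [e] at h
      have h' := mul_le_mul_of_nonneg_left h hδ0
      have e2 : δ * (1 / (8 * δ) - 1) = 1 / 8 - δ := by field_simp
      rw [e2] at h'
      nlinarith
    nlinarith
  · rcases le_or_gt δ (η / (2 * k ^ 2)) with hs | hl
    · have hy := Real.abs_exp_sub_one_sub_id_le (x := -(k * δ))
        (by rw [abs_neg, abs_of_nonneg (by positivity)]; exact hsmall.le)
      have hy2 := (abs_le.mp hy).2
      have hkd : 2 * (k : ℝ) ^ 2 * δ ≤ η := by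
        rw [le_div_iff₀ (by positivity)] at hs; linarith
      have hs1 : k * δ - 2 * k ^ 2 * δ ^ 2 ≤ 1 - ((1 - δ) ^ k + δ ^ k) := by
        have : δ ^ 2 ≤ k ^ 2 * δ ^ 2 := by
          have : (1 : ℝ) ≤ k ^ 2 := by nlinarith
          nlinarith [sq_nonneg δ]
        nlinarith
      have hm1 := mul_le_mul_of_nonneg_left hs1 (by linarith : 0 ≤ m)
      have hb : m * (2 * k ^ 2 * δ ^ 2) ≤ η * δ := by
        have : 2 * (k : ℝ) ^ 2 * δ ^ 2 ≤ η * δ := by nlinarith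
        have h5 : 0 ≤ 2 * (k : ℝ) ^ 2 * δ ^ 2 := by positivity
        nlinarith
      have hmk' := mul_le_mul_of_nonneg_right hmk hδ0
      set A := (1 / 2 : ℝ) ^ k * Real.exp (2 * η) with hA
      have hlA : Real.log A = 2 * η - k * Real.log 2 := by
        rw [hA, Real.log_mul (by positivity) (by positivity), Real.log_exp, Real.log_pow,
          one_div, Real.log_inv]; ring
      have h := Real.log_le_sub_one_of_pos (x := A / δ) (by positivity)
      rw [Real.log_div hApos.ne' hpos.ne', hlA] at h
      have h' := mul_le_mul_of_nonneg_left h hδ0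
      have e2 : δ * (A / δ - 1) = A - δ := by field_simp
      rw [e2] at h'
      nlinarith
    · have he : Real.exp (-(k * δ)) ≤ 1 - k * δ / 2 := by
        have hy0 : 0 < k * δ := by positivity
        rw [Real.exp_neg]
        have := Real.add_one_le_exp (k * δ)
        calc (Real.exp (k * δ))⁻¹ ≤ (k * δ + 1)⁻¹ := inv_anti₀ (by positivity) this
          _ ≤ 1 - k * δ / 2 := by
            rw [inv_le_iff_one_le_mul₀ (by positivity)]
            nlinarith
      have hs1 : k * δ / 4 ≤ 1 - ((1 - δ) ^ k + δ ^ k) := by nlinarith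
      have hm1 := mul_le_mul_of_nonneg_left hs1 (by linarith : 0 ≤ m)
      have hld : -Real.log δ ≤ Real.log (2 / η) + 2 * Real.log k := by
        have h := Real.log_le_log (by positivity) hl.le
        have e : Real.log (η / (2 * k ^ 2)) = -(Real.log (2 / η) + 2 * Real.log k) := by
          rw [Real.log_div hη.ne' (by positivity), Real.log_mul (by norm_num) (by positivity),
            Real.log_pow, Real.log_div (by norm_num) hη.ne']
          push_cast; ring
        linarith
      have h6 : δ * (1 - Real.log δ) ≤ δ * (0.15 * k) :=
        mul_le_mul_of_nonneg_left (by linarith) hδ0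
      have h7 : 0.6 * (k * δ / 4) ≤ m * (k * δ / 4) :=
        mul_le_mul_of_nonneg_right hm (by positivity)
      nlinarith

lemma log_self_rpow (x : ℝ) (hx : 0 ≤ x) : Real.log (x ^ x) = x * Real.log x := by
  rcases hx.eq_or_lt with h | h
  · subst h; simp
  · exact Real.log_rpow h x

lemma self_rpow_pos (x : ℝ) (hx : 0 ≤ x) : 0 < x ^ x := by
  rcases hx.eq_or_lt with h | h
  · subst h; simp
  · exact Real.rpow_pos_of_pos h x

lemma fN_eq (k : ℕ) (α : ℝ) :
    fN k α = 1 - 2 * (2 * (1 / 2 : ℝ) ^ k) + (2 * (1 / 2 : ℝ) ^ k) * (α ^ k + (1 - α) ^ k) := by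
  unfold fN
  rw [zpow_sub₀ (by norm_num), zpow_sub₀ (by norm_num), zpow_natCast]
  simp only [one_div, inv_pow]
  norm_num
  ring

lemma neg_log_bound (q : ℝ) (h0 : 0 < q) (h1 : q ≤ 1 / 4) :
    -Real.log (1 - q) ≤ q + q ^ 2 / 2 + q ^ 3 := by
  have h5 := Real.abs_log_sub_add_sum_range_le (x := q) (by rw [abs_of_pos h0]; linarith) 3
  rw [abs_of_pos h0] at h5
  have h6 := (abs_le.mp h5).1
  simp only [Finset.sum_range_succ, Finset.sum_range_zero] at h6
  norm_num at h6
  have h7 : q ^ 4 / (1 - q) ≤ q ^ 3 / 3 := by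
    rw [div_le_iff₀ (by linarith)]
    nlinarith [pow_pos h0 3]
  have := pow_pos h0 3
  linarith

set_option maxHeartbeats 2000000 in
lemma main_bound (ε : ℝ) (hε : 0 < ε) (k : ℕ) (hk : 4 ≤ k) (q η r δ : ℝ)
    (hq : q = 2 * (1 / 2 : ℝ) ^ k) (hη : η = Real.log (1 + ε) / 2)
    (hqε : q ≤ ε / 8) (hq1 : q ≤ 1 / 4) 
    (hm : (Real.log 2 / 2 + 1 / 2 + ε) * q ≤ 0.09)
    (hmk : (Real.log 2 / 2 + 1 / 2 + ε) * (k * q) ≤ η)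
    (hlog : 1 + Real.log (2 / η) + 2 * Real.log k ≤ 0.15 * k)
    (hr : 0 < r) (hrR : r ≤ Real.log 2 / q - (Real.log 2 / 2 + 1 / 2 + ε))
    (hδ0 : 0 ≤ δ) (hδ : δ < 0.1) : gr k r (1 - δ) < gr k r (1 / 2) := by
  have hl2 := Real.log_two_lt_d9
  have hl2' := Real.log_two_gt_d9
  have hq0 : 0 < q := by rw [hq]; positivity
  have hη0 : 0 < η := by
    rw [hη]; exact half_pos (Real.log_pos (by linarith))
  set c := Real.log 2 / 2 + 1 / 2 + ε with hc
  have hc0 : 0 < c := by rw [hc]; linarith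
  set R := Real.log 2 / q - c with hR
  have hRq : R * q = Real.log 2 - c * q := by rw [hR]; field_simp
  have hcore := core_bound k hk (Real.log 2 - c * q) η δ hη0 (by linarith)
    (by nlinarith) (by linarith) hlog hδ0 hδ
  have hexp : Real.exp (2 * η) = 1 + ε := by
    rw [hη, mul_div_cancel₀ _ (by norm_num : (2 : ℝ) ≠ 0), Real.exp_log (by linarith)]
  rw [hexp, show (1 / 2 : ℝ) ^ k = q / 2 by rw [hq]; ring] at hcore
  set s := (1 - δ) ^ k + δ ^ k with hs
  have hs1 : q ≤ s := by
    have h1 : (0.9 : ℝ) ^ k ≤ (1 - δ) ^ k := pow_le_pow_left₀ (by norm_num) (by linarith) k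
    have h2 : (0.9 : ℝ) ^ k = 1.8 ^ k * (1 / 2) ^ k := by rw [← mul_pow]; norm_num
    have h3 : (2 : ℝ) ≤ 1.8 ^ k := by
      calc (2 : ℝ) ≤ 1.8 ^ 4 := by norm_num
        _ ≤ 1.8 ^ k := pow_le_pow_right₀ (by norm_num) hk
    have h4 : 0 ≤ δ ^ k := by positivity
    have h5 : (0 : ℝ) < (1 / 2) ^ k := by positivity
    rw [hq, hs]; nlinarith
  have hf : fN k (1 - δ) = 1 - 2 * q + q * s := by
    rw [fN_eq, ← hq, hs]; ring
  have hf2 : fN k (1 / 2) = (1 - q) ^ 2 := by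
    rw [fN_eq, ← hq, show (1 - 1 / 2 : ℝ) = 1 / 2 by norm_num,
      show (1 / 2 : ℝ) ^ k + (1 / 2) ^ k = q by rw [hq]; ring]; ring
  have hfge : (1 - q) ^ 2 ≤ fN k (1 - δ) := by rw [hf]; nlinarith
  have hf2pos : 0 < (1 - q) ^ 2 := by apply pow_pos; linarith
  have hfpos : 0 < fN k (1 - δ) := by linarith
  have hL0 : 2 * Real.log (1 - q) ≤ Real.log (fN k (1 - δ)) := by
    have := Real.log_le_log hf2pos hfge
    rwa [Real.log_pow] at this
  have hL1 : Real.log (fN k (1 - δ)) - Real.log (1 - q) ≤ -(q * (1 - s)) := by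
    rw [← Real.log_div hfpos.ne' (by linarith)]
    refine (Real.log_le_sub_one_of_pos (div_pos hfpos (by linarith))).trans ?_
    have hs2 : s ≤ 1 := by
      have h1 : (1 - δ) ^ k ≤ 1 - δ := pow_le_of_le_one (by linarith) (by linarith) (by omega)
      have h2 : δ ^ k ≤ δ := pow_le_of_le_one hδ0 (by linarith) (by omega)
      rw [hs]; linarith
    rw [sub_le_iff_le_add, div_le_iff₀ (by linarith), hf]
    nlinarith [mul_nonneg (sq_nonneg q) (sub_nonneg.mpr hs2)]
  have hnl := neg_log_bound q hq0 (by linarith)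
  have hRL : r * (Real.log (fN k (1 - δ)) - 2 * Real.log (1 - q)) ≤
      R * (q + q ^ 2 / 2 + q ^ 3 - q * (1 - s)) := by
    calc _ ≤ R * (Real.log (fN k (1 - δ)) - 2 * Real.log (1 - q)) :=
          mul_le_mul_of_nonneg_right hrR (by linarith)
      _ ≤ _ := mul_le_mul_of_nonneg_left (by linarith) (by linarith)
  have hRe : R * (q + q ^ 2 / 2 + q ^ 3 - q * (1 - s)) =
      (Real.log 2 - c * q) * (1 + q / 2 + q ^ 2) - (Real.log 2 - c * q) * (1 - s) := by
    rw [← hRq]; ring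
  have hE4 : (Real.log 2 - c * q) * (1 + q / 2 + q ^ 2) ≤ Real.log 2 - q / 2 - 3 / 4 * ε * q := by
    have i1 : 0 ≤ c * q ^ 2 := by positivity
    have i2 : 0 ≤ c * q ^ 3 := by positivity
    have i3 : q ^ 2 ≤ ε / 8 * q := by
      rw [sq]; exact mul_le_mul_of_nonneg_right hqε hq0.le
    have i4 : Real.log 2 * q ^ 2 ≤ 1 * q ^ 2 :=
      mul_le_mul_of_nonneg_right (by linarith) (sq_nonneg q)
    have i5 : c * q = Real.log 2 * q / 2 + q / 2 + ε * q := by rw [hc]; ring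
    have i6 : 0 < ε * q := by positivity
    have i7 : (Real.log 2 - c * q) * (1 + q / 2 + q ^ 2) = Real.log 2 + Real.log 2 * q / 2
      + Real.log 2 * q ^ 2 - c * q - c * q ^ 2 / 2 - c * q ^ 3 := by ring
    linarith
  have hH : -((1 - δ) * Real.log (1 - δ)) ≤ δ := by
    have h := Real.log_le_sub_one_of_pos (x := (1 - δ)⁻¹) (inv_pos.mpr (by linarith))
    rw [Real.log_inv] at h
    have h' := mul_le_mul_of_nonneg_left h (by linarith : 0 ≤ 1 - δ)
    rw [mul_sub, mul_inv_cancel₀ (by linarith : 1 - δ ≠ 0)] at h'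
    linarith
  have hεq : 0 < ε * q := by positivity
  unfold gr
  rw [sub_sub_cancel, hf2]
  have p1 := self_rpow_pos (1 - δ) (by linarith)
  have p2 := self_rpow_pos δ hδ0
  have p3 := Real.rpow_pos_of_pos hfpos r
  have p4 := Real.rpow_pos_of_pos hf2pos r
  have p5 := self_rpow_pos (1 / 2) (by norm_num)
  have e1 : (1 - 1 / 2 : ℝ) = 1 / 2 := by norm_num
  rw [e1]
  apply (Real.log_lt_log_iff (by positivity) (by positivity)).mp
  rw [Real.log_div p3.ne' (by positivity), Real.log_div p4.ne' (by positivity),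
    Real.log_mul p1.ne' p2.ne', Real.log_mul p5.ne' p5.ne', log_self_rpow _ hδ0,
    log_self_rpow _ (by linarith : 0 ≤ 1 - δ), log_self_rpow (1 / 2) (by norm_num),
    Real.log_rpow hfpos, Real.log_rpow hf2pos, Real.log_pow, one_div, Real.log_inv]
  push_cast
  have e2 : r * (2 * Real.log (1 - q)) = 2 * (r * Real.log (1 - q)) := by ring
  rw [mul_sub, e2] at hRL
  rw [mul_sub δ 1] at hcore
  rw [e2]
  linarith

/-- For every `ε > 0` there is `k₀` such that for all `k ≥ k₀`,
`0 < r ≤ 2^(k-1) ln 2 - (ln 2)/2 - 1/2 - ε`, and `α ∈ (0.9, 1]`,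
one has `g_r(α) < g_r(1/2)`. -/
theorem gr_far_from_half (ε : ℝ) (hε : 0 < ε) :
    ∃ k₀ : ℕ, ∀ k : ℕ, k₀ ≤ k → ∀ r : ℝ, 0 < r →
      r ≤ (2 : ℝ) ^ ((k : ℤ) - 1) * Real.log 2 - Real.log 2 / 2 - 1 / 2 - ε →
      ∀ α ∈ Set.Ioc (0.9 : ℝ) 1, gr k r α < gr k r (1 / 2) := by
  have hη0 : 0 < Real.log (1 + ε) / 2 := half_pos (Real.log_pos (by linarith))
  obtain ⟨η, hη⟩ : ∃ η, η = Real.log (1 + ε) / 2 := ⟨_, rfl⟩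
  rw [← hη] at hη0
  have hc0 : 0 < Real.log 2 / 2 + 1 / 2 + ε := by
    have := Real.log_two_gt_d9
    linarith
  have t1 : Filter.Tendsto (fun k : ℕ => 2 * (1 / 2 : ℝ) ^ k) Filter.atTop (nhds 0) := by
    have := (tendsto_pow_atTop_nhds_zero_of_lt_one (r := (1 / 2 : ℝ)) (by norm_num)
      (by norm_num)).const_mul 2
    simpa using this
  have t2 : Filter.Tendsto (fun k : ℕ => (Real.log 2 / 2 + 1 / 2 + ε) *
      (k * (2 * (1 / 2 : ℝ) ^ k))) Filter.atTop (nhds 0) := by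
    have := (tendsto_self_mul_const_pow_of_lt_one (r := (1 / 2 : ℝ)) (by norm_num)
      (by norm_num)).const_mul ((Real.log 2 / 2 + 1 / 2 + ε) * 2)
    rw [mul_zero] at this
    refine this.congr fun k => by ring
  have t3 := t1.const_mul (Real.log 2 / 2 + 1 / 2 + ε)
  rw [mul_zero] at t3
  have l1 : ∀ᶠ k : ℕ in Filter.atTop, Real.log k ≤ 0.05 * k := by
    have h := (Real.isLittleO_log_id_atTop.comp_tendsto
      (tendsto_natCast_atTop_atTop (R := ℝ))).bound (by norm_num : (0 : ℝ) < 0.05)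
    filter_upwards [h] with k hk
    simp only [Function.comp, id, Real.norm_eq_abs, Nat.abs_cast] at hk
    exact (le_abs_self _).trans hk
  have l2 : ∀ᶠ k : ℕ in Filter.atTop, (1 + Real.log (2 / η)) / 0.05 ≤ k :=
    (tendsto_natCast_atTop_atTop (R := ℝ)).eventually_ge_atTop _
  have ev : ∀ᶠ k : ℕ in Filter.atTop, ∀ r : ℝ, 0 < r →
      r ≤ (2 : ℝ) ^ ((k : ℤ) - 1) * Real.log 2 - Real.log 2 / 2 - 1 / 2 - ε →
      ∀ α ∈ Set.Ioc (0.9 : ℝ) 1, gr k r α < gr k r (1 / 2) := by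
    filter_upwards [t1.eventually_le_const (by positivity : 0 < ε / 8),
      t1.eventually_le_const (by norm_num : (0 : ℝ) < 1 / 4),
      t3.eventually_le_const (by norm_num : (0 : ℝ) < 0.09),
      t2.eventually_le_const hη0, l1, l2, Filter.eventually_ge_atTop 4]
      with k h1 h2 h3 h4 h5 h6 h7 r hr hrR α hα
    have := main_bound ε hε k h7 _ η r (1 - α) rfl hη h1 h2 h3 h4
      (by rw [div_le_iff₀ (by norm_num)] at h6; linarith) hr
      (by
        refine hrR.trans (le_of_eq ?_)
        rw [zpow_sub₀ (by norm_num), zpow_natCast, one_div, inv_pow]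
        field_simp
        ring) (by linarith [hα.2]) (by linarith [hα.1])
    rwa [sub_sub_cancel] at this
  exact Filter.eventually_atTop.mp ev
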